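/- Super-fidelity is super-multiplicative: for density matrices A, B, C, D, G(A⊗B, C⊗D) ≥ G(A,C)·G(B,D), where G(X,Y) = tr(XY) + √((1-tr X²)(1-tr Y²)). -/

import Mathlib

open Matrix Kronecker ComplexOrder

/-- Super-fidelity `G(X,Y) = tr(XY) + √((1-tr X²)(1-tr Y²))`. -/
noncomputable def supFid {n : Type*} [Fintype n] (X Y : Matrix n n ℂ) : ℝ :=
  ((X * Y).trace).re +
    Real.sqrt ((1 - ((X * X).trace).re) * (1 - ((Y * Y).trace).re))

/-!
For Hermitian matrices in the unit ball of the Frobenius norm, `supFid X Y` is the inner product of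
the unit vectors `(X, √(1 - ‖X‖²))` and `(Y, √(1 - ‖Y‖²))`. The inner product of tensor products of
such vectors is `supFid A C * supFid B D`; its leading term is `⟪A ⊗ B, C ⊗ D⟫`, and the other three
components of the tensor products have total squared norms `1 - ‖A ⊗ B‖²` and `1 - ‖C ⊗ D‖²`, so
Cauchy–Schwarz bounds their contribution by the square root in `supFid (A ⊗ B) (C ⊗ D)`.
Density matrices lie in the unit ball because the Frobenius norm is submultiplicative: if
`X = Sᴴ * S`, then `‖X‖ ≤ ‖S‖² = tr X = 1`.
-/

section Frobenius

open scoped Matrix.Norms.Frobenius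

variable {𝕜 R m n : Type*} [RCLike 𝕜] [Fintype m] [Fintype n]

lemma frobenius_norm_sq [SeminormedAddCommGroup R] (A : Matrix m n R) :
    ‖A‖ ^ 2 = ∑ i, ∑ j, ‖A i j‖ ^ 2 := by
  rw [frobenius_norm_def, ← Real.sqrt_eq_rpow, Real.sq_sqrt (by positivity)]
  simp only [Real.rpow_two]

lemma trace_mul_conjTranspose_self_eq_frobenius_norm_sq (A : Matrix m n 𝕜) :
    (A * Aᴴ).trace = ((‖A‖ ^ 2 : ℝ) : 𝕜) := by
  simp [frobenius_norm_sq, trace, mul_apply, RCLike.mul_conj]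

lemma trace_conjTranspose_mul_self_eq_frobenius_norm_sq (A : Matrix m n 𝕜) :
    (Aᴴ * A).trace = ((‖A‖ ^ 2 : ℝ) : 𝕜) := by
  rw [trace_mul_comm, trace_mul_conjTranspose_self_eq_frobenius_norm_sq]

lemma norm_trace_mul_le_frobenius_norm_mul [NonUnitalSeminormedRing R]
    (A : Matrix m n R) (B : Matrix n m R) :
    ‖(A * B).trace‖ ≤ ‖A‖ * ‖B‖ := by
  refine le_of_sq_le_sq ?_ (by positivity)
  calc ‖(A * B).trace‖ ^ 2 = ‖∑ p : m × n, A p.1 p.2 * B p.2 p.1‖ ^ 2 := by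
        simp only [trace, diag_apply, mul_apply, Fintype.sum_prod_type]
    _ ≤ (∑ p : m × n, ‖A p.1 p.2‖ * ‖B p.2 p.1‖) ^ 2 := by
        gcongr
        exact norm_sum_le_of_le _ fun p _ ↦ norm_mul_le _ _
    _ ≤ (∑ p : m × n, ‖A p.1 p.2‖ ^ 2) * ∑ p : m × n, ‖B p.2 p.1‖ ^ 2 :=
        Finset.sum_mul_sq_le_sq_mul_sq _ _ _
    _ = (‖A‖ * ‖B‖) ^ 2 := by
        rw [mul_pow, ← frobenius_norm_transpose B]
        simp only [frobenius_norm_sq, Fintype.sum_prod_type, transpose_apply]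

lemma re_trace_mul_le_frobenius_norm_mul (A : Matrix m n 𝕜) (B : Matrix n m 𝕜) :
    RCLike.re (A * B).trace ≤ ‖A‖ * ‖B‖ :=
  (RCLike.re_le_norm _).trans (norm_trace_mul_le_frobenius_norm_mul A B)

lemma re_trace_mul_self_eq_frobenius_norm_sq {A : Matrix n n 𝕜} (hA : A.IsHermitian) :
    RCLike.re (A * A).trace = ‖A‖ ^ 2 := by
  have h := trace_mul_conjTranspose_self_eq_frobenius_norm_sq A
  rw [hA.eq] at h
  rw [h, RCLike.ofReal_re]

open scoped MatrixOrder in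
lemma trace_mul_le_trace_mul_trace {A B : Matrix n n 𝕜} (hA : A.PosSemidef) (hB : B.PosSemidef) :
    (A * B).trace ≤ A.trace * B.trace := by
  classical
  obtain ⟨S, rfl⟩ : ∃ S, A = Sᴴ * S := CStarAlgebra.nonneg_iff_eq_star_mul_self.mp hA.nonneg
  obtain ⟨T, rfl⟩ : ∃ T, B = Tᴴ * T := CStarAlgebra.nonneg_iff_eq_star_mul_self.mp hB.nonneg
  have trace_eq : (Sᴴ * S * (Tᴴ * T)).trace = ((‖S * Tᴴ‖ ^ 2 : ℝ) : 𝕜) := by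
    rw [← trace_mul_conjTranspose_self_eq_frobenius_norm_sq, conjTranspose_mul,
      conjTranspose_conjTranspose, Matrix.mul_assoc, trace_mul_comm]
    simp only [Matrix.mul_assoc]
  have norm_le : ‖S * Tᴴ‖ ≤ ‖S‖ * ‖T‖ := by
    simpa only [frobenius_norm_conjTranspose] using frobenius_norm_mul S Tᴴ
  rw [trace_eq, trace_conjTranspose_mul_self_eq_frobenius_norm_sq,
    trace_conjTranspose_mul_self_eq_frobenius_norm_sq, ← RCLike.ofReal_mul, ← mul_pow]
  exact RCLike.ofReal_le_ofReal.mpr (by gcongr)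

lemma re_trace_mul_self_le_one {A : Matrix n n 𝕜} (hA : A.PosSemidef) (tA : A.trace = 1) :
    RCLike.re (A * A).trace ≤ 1 := by
  simpa [tA] using (RCLike.le_iff_re_im.mp (trace_mul_le_trace_mul_trace hA hA)).1

end Frobenius

lemma isSelfAdjoint_trace_mul {R n : Type*} [NonUnitalCommSemiring R] [StarRing R] [Fintype n]
    {A B : Matrix n n R} (hA : A.IsHermitian) (hB : B.IsHermitian) :
    IsSelfAdjoint (A * B).trace := by
  rw [isSelfAdjoint_iff, ← trace_conjTranspose, conjTranspose_mul, hA.eq, hB.eq, trace_mul_comm]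

lemma re_trace_kronecker_mul_kronecker {𝕜 m n : Type*} [RCLike 𝕜] [Fintype m] [Fintype n]
    {A C : Matrix m m 𝕜} (hA : A.IsHermitian) (hC : C.IsHermitian) (B D : Matrix n n 𝕜) :
    RCLike.re ((A ⊗ₖ B) * (C ⊗ₖ D)).trace =
      RCLike.re (A * C).trace * RCLike.re (B * D).trace := by
  have im_eq_zero : RCLike.im (A * C).trace = 0 :=
    RCLike.conj_eq_iff_im.mp (isSelfAdjoint_trace_mul hA hC)
  rw [← mul_kronecker_mul, trace_kronecker, RCLike.mul_re, im_eq_zero, zero_mul, sub_zero]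

section Real

variable {p q r s x y : ℝ}

lemma mul_sqrt_add_mul_sqrt_add_sqrt_mul_sqrt_le
    (hp : p ^ 2 ≤ 1) (hq : q ^ 2 ≤ 1) (hr : r ^ 2 ≤ 1) (hs : s ^ 2 ≤ 1) :
    p * r * √((1 - q ^ 2) * (1 - s ^ 2)) + q * s * √((1 - p ^ 2) * (1 - r ^ 2)) +
        √((1 - p ^ 2) * (1 - r ^ 2)) * √((1 - q ^ 2) * (1 - s ^ 2)) ≤
      √((1 - p ^ 2 * q ^ 2) * (1 - r ^ 2 * s ^ 2)) := by
  have one_sub_mul_eq {a b : ℝ} (ha : a ^ 2 ≤ 1) (hb : b ^ 2 ≤ 1) : 1 - a ^ 2 * b ^ 2 =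
      (a * √(1 - b ^ 2)) ^ 2 + (b * √(1 - a ^ 2)) ^ 2 + (√(1 - a ^ 2) * √(1 - b ^ 2)) ^ 2 := by
    simp only [mul_pow, Real.sq_sqrt (sub_nonneg.mpr ha), Real.sq_sqrt (sub_nonneg.mpr hb)]
    ring
  have cauchy_schwarz := Real.sum_mul_le_sqrt_mul_sqrt Finset.univ
    ![p * √(1 - q ^ 2), q * √(1 - p ^ 2), √(1 - p ^ 2) * √(1 - q ^ 2)]
    ![r * √(1 - s ^ 2), s * √(1 - r ^ 2), √(1 - r ^ 2) * √(1 - s ^ 2)]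
  simp only [Fin.sum_univ_three, cons_val, ← one_sub_mul_eq hp hq, ← one_sub_mul_eq hr hs]
    at cauchy_schwarz
  have hpq : p ^ 2 * q ^ 2 ≤ 1 := mul_le_one₀ hp (sq_nonneg q) hq
  rw [Real.sqrt_mul (sub_nonneg.mpr hp), Real.sqrt_mul (sub_nonneg.mpr hq),
    Real.sqrt_mul (sub_nonneg.mpr hpq)]
  linarith

lemma add_sqrt_mul_add_sqrt_le
    (hp : p ^ 2 ≤ 1) (hq : q ^ 2 ≤ 1) (hr : r ^ 2 ≤ 1) (hs : s ^ 2 ≤ 1)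
    (hx : x ≤ p * r) (hy : y ≤ q * s) :
    (x + √((1 - p ^ 2) * (1 - r ^ 2))) * (y + √((1 - q ^ 2) * (1 - s ^ 2))) ≤
      x * y + √((1 - p ^ 2 * q ^ 2) * (1 - r ^ 2 * s ^ 2)) := by
  set u := √((1 - p ^ 2) * (1 - r ^ 2))
  set v := √((1 - q ^ 2) * (1 - s ^ 2))
  calc (x + u) * (y + v) = x * y + (x * v + y * u + u * v) := by ring
    _ ≤ x * y + (p * r * v + q * s * u + u * v) := by gcongr
    _ ≤ _ := by gcongr; exact mul_sqrt_add_mul_sqrt_add_sqrt_mul_sqrt_le hp hq hr hs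

end Real

open scoped Matrix.Norms.Frobenius in
theorem superFidelity_superMultiplicative_general {m n : Type*} [Fintype m] [Fintype n]
    {A C : Matrix m m ℂ} {B D : Matrix n n ℂ}
    (hA : A.IsHermitian) (hB : B.IsHermitian) (hC : C.IsHermitian) (hD : D.IsHermitian)
    (pA : ((A * A).trace).re ≤ 1) (pB : ((B * B).trace).re ≤ 1)
    (pC : ((C * C).trace).re ≤ 1) (pD : ((D * D).trace).re ≤ 1) :
    supFid (A ⊗ₖ B) (C ⊗ₖ D) ≥ supFid A C * supFid B D := by
  simp only [supFid, ← RCLike.re_eq_complex_re] at pA pB pC pD ⊢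
  simp only [re_trace_kronecker_mul_kronecker, hA, hC,
    re_trace_mul_self_eq_frobenius_norm_sq, hB, hD] at pA pB pC pD ⊢
  exact add_sqrt_mul_add_sqrt_le pA pB pC pD
    (re_trace_mul_le_frobenius_norm_mul A C) (re_trace_mul_le_frobenius_norm_mul B D)

theorem superFidelity_superMultiplicative {N M : ℕ}
    (A C : Matrix (Fin N) (Fin N) ℂ) (B D : Matrix (Fin M) (Fin M) ℂ)
    (hA : A.PosSemidef) (hB : B.PosSemidef) (hC : C.PosSemidef) (hD : D.PosSemidef)
    (tA : A.trace = 1) (tB : B.trace = 1) (tC : C.trace = 1) (tD : D.trace = 1) :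
    supFid (A ⊗ₖ B) (C ⊗ₖ D) ≥ supFid A C * supFid B D :=
  superFidelity_superMultiplicative_general
    hA.isHermitian hB.isHermitian hC.isHermitian hD.isHermitian
    (re_trace_mul_self_le_one hA tA) (re_trace_mul_self_le_one hB tB)
    (re_trace_mul_self_le_one hC tC) (re_trace_mul_self_le_one hD tD)
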